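/- arXiv:2604.15881 — 9 statements merged into one kernel-verified Lean document; each statement's English description precedes it below -/
import Mathlib

section
/- Let μ be a measure on [0, ∞), and let γ > 0 and ξ ≥ 0 be real numbers. Define l*(y) = (y − ξ/γ)_+. Then for every measurable function l : [0, ∞) → [0, ∞), ∫ (ξ·l*(y) + (γ/2)·(y − l*(y))²) dμ(y) ≤ ∫ (ξ·l(y) + (γ/2)·(y − l(y))²) dμ(y), where both integrals are taken in [0, ∞] (both integrands are nonnegative). -/
open MeasureTheory

/-- integrated form of the customer's optimal excess-of-loss coverage:
for any measure μ on [0,∞) (i.e. giving no mass to (−∞,0)), γ > 0, ξ ≥ 0, and any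
nonnegative measurable coverage function l, the coverage l*(y) = (y − ξ/γ)₊ minimizes
∫ (ξ·l(y) + (γ/2)·(y − l(y))²) dμ(y), the integrals being taken in [0,∞]. -/
theorem integrated_excess_of_loss_optimal
    (μ : Measure ℝ) (hμ : μ (Set.Iio 0) = 0)
    (γ ξ : ℝ) (hγ : 0 < γ) (hξ : 0 ≤ ξ)
    (l : ℝ → ℝ) (hl_meas : Measurable l) (hl_nonneg : ∀ y, 0 ≤ l y) :
    ∫⁻ y, ENNReal.ofReal
        (ξ * max (y - ξ / γ) 0 + γ / 2 * (y - max (y - ξ / γ) 0) ^ 2) ∂μ ≤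
      ∫⁻ y, ENNReal.ofReal (ξ * l y + γ / 2 * (y - l y) ^ 2) ∂μ := by
  refine lintegral_mono fun y => ENNReal.ofReal_le_ofReal ?_
  have hl := hl_nonneg y
  obtain ⟨c, hc⟩ : ∃ c, c = ξ / γ := ⟨_, rfl⟩
  have hx : ξ = γ * c := by rw [hc]; field_simp
  rw [← hc, hx]
  rcases le_total c y with h | h
  · rw [max_eq_left (by linarith)]
    nlinarith [mul_nonneg hγ.le (sq_nonneg (y - l y - c))]
  · rw [max_eq_right (by linarith)]
    nlinarith [mul_nonneg hγ.le (mul_nonneg (sub_nonneg.2 h) hl),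
      mul_nonneg hγ.le (sq_nonneg (l y))]
end

section
/- Let Y be a nonnegative random variable on a probability space with E[Y²] < ∞, and let γ > 0 and ξ ≥ 0 be real numbers. Then for every d ≥ 0, ξ·E[(Y − ξ/γ)_+] + (γ/2)·E[(min(Y, ξ/γ))²] ≤ ξ·E[(Y − d)_+] + (γ/2)·E[(min(Y, d))²]; that is, the function d ↦ ξ·E[(Y − d)_+] + (γ/2)·E[(min(Y, d))²] on [0, ∞) attains its minimum at d = ξ/γ. -/
open MeasureTheory

/-- for a nonnegative random variable Y with E[Y²] < ∞, γ > 0 and ξ ≥ 0,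
the function d ↦ ξ·E[(Y − d)₊] + (γ/2)·E[(min(Y,d))²] on [0,∞) attains its minimum
at d = ξ/γ. -/
theorem deductible_optimal_at_xi_div_gamma
    {Ω : Type*} [MeasurableSpace Ω] (P : Measure Ω) [IsProbabilityMeasure P]
    (Y : Ω → ℝ) (hY_meas : Measurable Y) (hY_nonneg : ∀ ω, 0 ≤ Y ω)
    (hY2 : Integrable (fun ω => (Y ω) ^ 2) P)
    (γ ξ : ℝ) (hγ : 0 < γ) (hξ : 0 ≤ ξ)
    (d : ℝ) (hd : 0 ≤ d) :
    ξ * (∫ ω, max (Y ω - ξ / γ) 0 ∂P) + γ / 2 * (∫ ω, (min (Y ω) (ξ / γ)) ^ 2 ∂P) ≤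
      ξ * (∫ ω, max (Y ω - d) 0 ∂P) + γ / 2 * (∫ ω, (min (Y ω) d) ^ 2 ∂P) := by
  have hYi : Integrable Y P :=
    ((memLp_two_iff_integrable_sq hY_meas.aestronglyMeasurable).2 hY2).integrable (by norm_num)
  have h1 : ∀ c : ℝ, Integrable (fun ω => max (Y ω - c) 0) P := fun c =>
    (hYi.sub (integrable_const c)).pos_part
  have h2 : ∀ c : ℝ, 0 ≤ c → Integrable (fun ω => (min (Y ω) c) ^ 2) P := by
    intro c hc
    refine hY2.mono' ((hY_meas.min measurable_const).pow_const 2).aestronglyMeasurable ?_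
    refine Filter.Eventually.of_forall fun ω => ?_
    have h0 : 0 ≤ min (Y ω) c := le_min (hY_nonneg ω) hc
    rw [Real.norm_of_nonneg (by positivity)]
    exact pow_le_pow_left₀ h0 (min_le_left _ _) 2
  have hm : 0 ≤ ξ / γ := by positivity
  have hx : ξ = γ * (ξ / γ) := by field_simp
  have key : ∀ c : ℝ, 0 ≤ c →
      ξ * (∫ ω, max (Y ω - c) 0 ∂P) + γ / 2 * (∫ ω, (min (Y ω) c) ^ 2 ∂P) =
      ∫ ω, (ξ * max (Y ω - c) 0 + γ / 2 * (min (Y ω) c) ^ 2) ∂P := by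
    intro c hc
    rw [integral_add ((h1 c).const_mul ξ) ((h2 c hc).const_mul (γ / 2)),
      integral_const_mul, integral_const_mul]
  rw [key _ hm, key _ hd]
  refine integral_mono (((h1 _).const_mul ξ).add ((h2 _ hm).const_mul (γ / 2)))
    (((h1 _).const_mul ξ).add ((h2 _ hd).const_mul (γ / 2))) fun ω => ?_
  have hmax : ∀ c : ℝ, max (Y ω - c) 0 = Y ω - min (Y ω) c := by
    intro c
    rcases le_total (Y ω) c with h | h
    · rw [min_eq_left h, max_eq_right (by linarith)]; ring
    · rw [min_eq_right h, max_eq_left (by linarith)]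
  simp only [hmax]
  generalize ξ / γ = m at *
  subst hx
  have hsq : (min (Y ω) m - m) ^ 2 ≤ (min (Y ω) d - m) ^ 2 := by
    rcases le_total (Y ω) m with h | h
    · rw [min_eq_left h]
      have := min_le_left (Y ω) d
      nlinarith
    · rw [min_eq_right h]
      simpa using sq_nonneg (min (Y ω) d - m)
  nlinarith [mul_le_mul_of_nonneg_left hsq hγ.le]
end

section
/- Let Y be a nonnegative random variable on a probability space with E[Y²] < ∞, let 0 < γ_L ≤ γ_H, let γ ∈ [γ_L, γ_H], and let ξ ≥ 0. Define J(γ̃) := −ξ·E[(Y − ξ/γ̃)_+] − (γ/2)·E[(min(Y, ξ/γ̃))²] for γ̃ ∈ [γ_L, γ_H]. Then J(γ̃) ≤ J(γ) for every γ̃ ∈ [γ_L, γ_H]; that is, γ̃ = γ is a maximizer of J on [γ_L, γ_H]. -/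
open MeasureTheory

/-- truth-telling under risk-attitude uncertainty. For a nonnegative
random variable Y with E[Y²] < ∞, 0 < γ_L ≤ γ_H, γ ∈ [γ_L, γ_H] and ξ ≥ 0, the
function J(γ̃) := −ξ·E[(Y − ξ/γ̃)₊] − (γ/2)·E[(min(Y, ξ/γ̃))²] on [γ_L, γ_H]
is maximized at γ̃ = γ. -/
theorem truth_telling_risk_attitude
    {Ω : Type*} [MeasurableSpace Ω] (P : Measure Ω) [IsProbabilityMeasure P]
    (Y : Ω → ℝ) (hY_meas : Measurable Y) (hY_nonneg : ∀ ω, 0 ≤ Y ω)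
    (hY2 : Integrable (fun ω => (Y ω) ^ 2) P)
    (γL γH γ ξ : ℝ) (hγL : 0 < γL) (hγLH : γL ≤ γH)
    (hγ : γ ∈ Set.Icc γL γH) (hξ : 0 ≤ ξ)
    (J : ℝ → ℝ)
    (hJ : ∀ γt : ℝ, J γt =
      -(ξ * (∫ ω, max (Y ω - ξ / γt) 0 ∂P)) -
        γ / 2 * (∫ ω, (min (Y ω) (ξ / γt)) ^ 2 ∂P)) :
    ∀ γt ∈ Set.Icc γL γH, J γt ≤ J γ := by
  intro γt hγt
  have hg : 0 < γ := lt_of_lt_of_le hγL hγ.1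
  have hgt : 0 < γt := lt_of_lt_of_le hγL hγt.1
  have hYm : MemLp Y 2 P := (memLp_two_iff_integrable_sq hY_meas.aestronglyMeasurable).2 hY2
  have hY1 : Integrable Y P := hYm.integrable (by norm_num)
  have i1 : ∀ d : ℝ, Integrable (fun ω => max (Y ω - d) 0) P := fun d =>
    (hY1.sub (integrable_const d)).pos_part
  have i2 : ∀ d : ℝ, 0 ≤ d → Integrable (fun ω => (min (Y ω) d) ^ 2) P := by
    intro d hd
    refine hY2.mono' ((hY_meas.min measurable_const).pow_const 2).aestronglyMeasurable
      (Filter.Eventually.of_forall fun ω => ?_)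
    rw [Real.norm_of_nonneg (sq_nonneg _)]
    exact pow_le_pow_left₀ (le_min (hY_nonneg ω) hd) (min_le_left _ _) 2
  have hd : 0 ≤ ξ / γ := by positivity
  have hdt : 0 ≤ ξ / γt := by positivity
  have key : ∫ ω, (ξ * max (Y ω - ξ / γ) 0 + γ / 2 * (min (Y ω) (ξ / γ)) ^ 2) ∂P ≤
      ∫ ω, (ξ * max (Y ω - ξ / γt) 0 + γ / 2 * (min (Y ω) (ξ / γt)) ^ 2) ∂P := by
    refine integral_mono (((i1 _).const_mul _).add ((i2 _ hd).const_mul _))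
      (((i1 _).const_mul _).add ((i2 _ hdt).const_mul _)) fun ω => ?_
    have hm : ∀ d : ℝ, max (Y ω - d) 0 = Y ω - min (Y ω) d := by
      intro d
      rcases le_total (Y ω) d with h | h
      · rw [min_eq_left h, max_eq_right (by linarith)]; ring
      · rw [min_eq_right h, max_eq_left (by linarith)]
    have hx : ξ = γ * (ξ / γ) := by field_simp
    simp only [hm]
    have hle : min (Y ω) (ξ / γt) ≤ Y ω := min_le_left _ _
    generalize min (Y ω) (ξ / γt) = m at hle
    generalize ξ / γ = d at hx
    subst hx
    have hs : (min (Y ω) d - d) ^ 2 ≤ (m - d) ^ 2 := by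
      rcases le_total (Y ω) d with h | h
      · rw [min_eq_left h]; nlinarith
      · rw [min_eq_right h]; nlinarith [sq_nonneg (m - d)]
    nlinarith [mul_le_mul_of_nonneg_left hs hg.le]
  rw [integral_add ((i1 _).const_mul _) ((i2 _ hd).const_mul _),
    integral_add ((i1 _).const_mul _) ((i2 _ hdt).const_mul _)] at key
  simp only [integral_const_mul] at key
  rw [hJ, hJ]
  linarith
end

section
/- Let θ_L < θ_H be real numbers, ξ₀ > 0, K > 0, and let φ : [θ_L, θ_H] × ℝ → ℝ be continuous with 0 ≤ φ(θ, x) ≤ K for all θ ∈ [θ_L, θ_H] and all x ∈ [0, ξ₀]. Assume (1 + ξ₀)·e^{−K·(θ_H − θ_L)} ≥ 1. Let A be the set of continuous functions ξ : [θ_L, θ_H] → ℝ with ξ(θ_L) = ξ₀ and 0 ≤ ξ(θ) ≤ ξ₀ for all θ, and for ξ ∈ A define (Tξ)(θ) := (1 + ξ₀)·exp(−∫_{θ_L}^{θ} φ(z, ξ(z)) dz) − 1. Then for every ξ ∈ A, the function Tξ is continuous, satisfies (Tξ)(θ_L) = ξ₀, and 0 ≤ (Tξ)(θ) ≤ ξ₀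 for all θ ∈ [θ_L, θ_H]; that is, T maps A into itself. -/
open MeasureTheory

/-- the self-map part of Lemma 4.5. Under the stated bounds on φ and
the condition (1 + ξ₀)·e^{−K(θ_H − θ_L)} ≥ 1, the operator
(Tξ)(θ) = (1 + ξ₀)·exp(−∫_{θ_L}^θ φ(z, ξ(z)) dz) − 1 maps the set A of continuous
functions ξ on [θ_L, θ_H] with ξ(θ_L) = ξ₀ and 0 ≤ ξ ≤ ξ₀ into itself. -/
theorem T_maps_A_into_itself
    (θL θH ξ₀ K : ℝ) (hθ : θL < θH) (hξ₀ : 0 < ξ₀) (hK : 0 < K)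
    (φ : ℝ → ℝ → ℝ)
    (hφcont : ContinuousOn (fun p : ℝ × ℝ => φ p.1 p.2)
      (Set.Icc θL θH ×ˢ (Set.univ : Set ℝ)))
    (hφbd : ∀ θ ∈ Set.Icc θL θH, ∀ x ∈ Set.Icc (0 : ℝ) ξ₀,
      0 ≤ φ θ x ∧ φ θ x ≤ K)
    (hgrow : 1 ≤ (1 + ξ₀) * Real.exp (-(K * (θH - θL))))
    (ξ : ℝ → ℝ)
    (hξcont : ContinuousOn ξ (Set.Icc θL θH))
    (hξL : ξ θL = ξ₀)
    (hξbd : ∀ θ ∈ Set.Icc θL θH, 0 ≤ ξ θ ∧ ξ θ ≤ ξ₀)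
    (Tξ : ℝ → ℝ)
    (hT : ∀ θ : ℝ, Tξ θ =
      (1 + ξ₀) * Real.exp (-(∫ z in θL..θ, φ z (ξ z))) - 1) :
    ContinuousOn Tξ (Set.Icc θL θH) ∧ Tξ θL = ξ₀ ∧
      ∀ θ ∈ Set.Icc θL θH, 0 ≤ Tξ θ ∧ Tξ θ ≤ ξ₀ := by
  have hg : ContinuousOn (fun z => φ z (ξ z)) (Set.Icc θL θH) :=
    hφcont.comp (f := fun z => (z, ξ z)) (continuousOn_id.prodMk hξcont)
      (fun z hz => ⟨hz, Set.mem_univ _⟩)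
  have hint : IntegrableOn (fun z => φ z (ξ z)) (Set.Icc θL θH) :=
    hg.integrableOn_compact isCompact_Icc
  have hI : ContinuousOn (fun θ => ∫ z in θL..θ, φ z (ξ z)) (Set.Icc θL θH) := by
    have h := intervalIntegral.continuousOn_primitive_interval
      (μ := volume) (f := fun z => φ z (ξ z)) (a := θL) (b := θH)
      (by rwa [Set.uIcc_of_le hθ.le])
    rwa [Set.uIcc_of_le hθ.le] at h
  have hTe : Tξ = fun θ => (1 + ξ₀) * Real.exp (-(∫ z in θL..θ, φ z (ξ z))) - 1 := funext hT
  refine ⟨?_, ?_, ?_⟩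
  · rw [hTe]
    exact (continuousOn_const.mul hI.neg.rexp).sub continuousOn_const
  · rw [hT]; simp
  · intro θ hθ'
    have hb : ∀ z ∈ Set.Icc θL θ, 0 ≤ φ z (ξ z) ∧ φ z (ξ z) ≤ K := fun z hz =>
      hφbd z ⟨hz.1, hz.2.trans hθ'.2⟩ _ (hξbd z ⟨hz.1, hz.2.trans hθ'.2⟩)
    have h0 : 0 ≤ ∫ z in θL..θ, φ z (ξ z) :=
      intervalIntegral.integral_nonneg hθ'.1 (fun z hz => (hb z hz).1)
    have hii : IntervalIntegrable (fun z => φ z (ξ z)) volume θL θ := by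
      apply ContinuousOn.intervalIntegrable
      rw [Set.uIcc_of_le hθ'.1]
      exact hg.mono (Set.Icc_subset_Icc_right hθ'.2)
    have h1 : ∫ z in θL..θ, φ z (ξ z) ≤ K * (θH - θL) := by
      have h := intervalIntegral.integral_mono_on hθ'.1 hii
        (intervalIntegrable_const (c := K)) (fun z hz => (hb z hz).2)
      rw [intervalIntegral.integral_const, smul_eq_mul] at h
      nlinarith [hθ'.2]
    rw [hT]
    have e1 : Real.exp (-(∫ z in θL..θ, φ z (ξ z))) ≤ 1 := Real.exp_le_one_iff.2 (by linarith)
    have e2 : Real.exp (-(K * (θH - θL))) ≤ Real.exp (-(∫ z in θL..θ, φ z (ξ z))) :=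
      Real.exp_le_exp.2 (by linarith)
    constructor <;> nlinarith
end

section
/- Let θ_L < θ_H be real numbers, ξ₀ > 0, K > 0, M > 0, and let φ : [θ_L, θ_H] × ℝ → ℝ be continuous with 0 ≤ φ(θ, x) ≤ K and |φ(θ, x₁) − φ(θ, x₂)| ≤ M·|x₁ − x₂| for all θ ∈ [θ_L, θ_H] and all x, x₁, x₂ ∈ [0, ξ₀]. Assume (1 + ξ₀)·M·(θ_H − θ_L) < 1 and (1 + ξ₀)·e^{−K·(θ_H − θ_L)} ≥ 1. Then there exists a unique continuous function ξ : [θ_L, θ_H] → ℝ with ξ(θ_L) = ξ₀ and 0 ≤ ξ(θ) ≤ ξ₀ for all θ such that ξ(θ) = (1 + ξ₀)·exp(−∫_{θ_L}^{θ} φ(z, ξ(z)) dz) − 1 for all θ ∈ [θ_L, θ_H]. -/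
open MeasureTheory

lemma exp_neg_sub_le_aux (a b : ℝ) (ha : 0 ≤ a) (hb : 0 ≤ b) :
    |Real.exp (-a) - Real.exp (-b)| ≤ |a - b| := by
  have key : ∀ a b : ℝ, 0 ≤ a → a ≤ b → Real.exp (-a) - Real.exp (-b) ≤ b - a := by
    intro a b ha hab
    have h1 : Real.exp (-b) = Real.exp (-a) * Real.exp (a - b) := by
      rw [← Real.exp_add]; congr 1; ring
    have h2 := Real.add_one_le_exp (a - b)
    have h3 : Real.exp (-a) ≤ 1 := Real.exp_le_one_iff.mpr (by linarith)
    have h4 := Real.exp_pos (-a)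
    rw [h1]
    nlinarith
  rcases le_total a b with h | h
  · rw [abs_of_nonneg (sub_nonneg.2 (Real.exp_le_exp.2 (by linarith))),
      abs_of_nonpos (by linarith)]
    linarith [key a b ha h]
  · rw [abs_of_nonpos (sub_nonpos.2 (Real.exp_le_exp.2 (by linarith))),
      abs_of_nonneg (by linarith)]
    linarith [key b a hb h]

/-- existence–uniqueness conclusion of Lemma 4.5 (Banach fixed point).
Under the stated bounds on φ and the conditions (1 + ξ₀)·M·(θ_H − θ_L) < 1 and
(1 + ξ₀)·e^{−K(θ_H − θ_L)} ≥ 1, there is a unique continuous function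
ξ : [θ_L, θ_H] → ℝ with ξ(θ_L) = ξ₀ and 0 ≤ ξ ≤ ξ₀ satisfying
ξ(θ) = (1 + ξ₀)·exp(−∫_{θ_L}^θ φ(z, ξ(z)) dz) − 1 on [θ_L, θ_H]. -/
theorem fixed_point_exists_unique
    (θL θH ξ₀ K M : ℝ) (hθ : θL < θH) (hξ₀ : 0 < ξ₀) (hK : 0 < K) (hM : 0 < M)
    (φ : ℝ → ℝ → ℝ)
    (hφcont : ContinuousOn (fun p : ℝ × ℝ => φ p.1 p.2)
      (Set.Icc θL θH ×ˢ (Set.univ : Set ℝ)))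
    (hφbd : ∀ θ ∈ Set.Icc θL θH, ∀ x ∈ Set.Icc (0 : ℝ) ξ₀,
      0 ≤ φ θ x ∧ φ θ x ≤ K)
    (hφlip : ∀ θ ∈ Set.Icc θL θH, ∀ x₁ ∈ Set.Icc (0 : ℝ) ξ₀,
      ∀ x₂ ∈ Set.Icc (0 : ℝ) ξ₀, |φ θ x₁ - φ θ x₂| ≤ M * |x₁ - x₂|)
    (hcontr : (1 + ξ₀) * M * (θH - θL) < 1)
    (hgrow : 1 ≤ (1 + ξ₀) * Real.exp (-(K * (θH - θL)))) :
    ∃ ξ : ℝ → ℝ,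
      (ContinuousOn ξ (Set.Icc θL θH) ∧ ξ θL = ξ₀ ∧
        (∀ θ ∈ Set.Icc θL θH, 0 ≤ ξ θ ∧ ξ θ ≤ ξ₀) ∧
        (∀ θ ∈ Set.Icc θL θH,
          ξ θ = (1 + ξ₀) * Real.exp (-(∫ z in θL..θ, φ z (ξ z))) - 1)) ∧
      ∀ ξ' : ℝ → ℝ,
        (ContinuousOn ξ' (Set.Icc θL θH) ∧ ξ' θL = ξ₀ ∧
          (∀ θ ∈ Set.Icc θL θH, 0 ≤ ξ' θ ∧ ξ' θ ≤ ξ₀) ∧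
          (∀ θ ∈ Set.Icc θL θH,
            ξ' θ = (1 + ξ₀) * Real.exp (-(∫ z in θL..θ, φ z (ξ' z))) - 1)) →
        Set.EqOn ξ' ξ (Set.Icc θL θH) := by
  have hle := hθ.le
  let P : ℝ → ℝ := fun z => (Set.projIcc θL θH hle z : ℝ)
  let Q : ℝ → ℝ := fun x => (Set.projIcc 0 ξ₀ hξ₀.le x : ℝ)
  have hPc : Continuous P := continuous_subtype_val.comp continuous_projIcc
  have hQc : Continuous Q := continuous_subtype_val.comp continuous_projIcc
  have hPm : ∀ z, P z ∈ Set.Icc θL θH := fun z => (Set.projIcc θL θH hle z).2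
  have hQm : ∀ z, Q z ∈ Set.Icc 0 ξ₀ := fun z => (Set.projIcc 0 ξ₀ hξ₀.le z).2
  have hPe : ∀ z ∈ Set.Icc θL θH, P z = z := fun z hz => by
    simp only [P, Set.projIcc_of_mem hle hz]
  have hQe : ∀ z ∈ Set.Icc 0 ξ₀, Q z = z := fun z hz => by
    simp only [Q, Set.projIcc_of_mem hξ₀.le hz]
  have hQl : ∀ x y, |Q x - Q y| ≤ |x - y| := fun x y =>
    Set.abs_projIcc_sub_projIcc hξ₀.le
  let X := C(Set.Icc θL θH, ℝ)
  let g : X → ℝ → ℝ := fun u z => φ (P z) (Q (u (Set.projIcc θL θH hle z)))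
  have hgc : ∀ u, Continuous (g u) := by
    intro u
    have h1 : Continuous (fun z => (P z, Q (u (Set.projIcc θL θH hle z)))) :=
      hPc.prodMk (hQc.comp (u.continuous.comp continuous_projIcc))
    exact hφcont.comp_continuous h1 (fun z => ⟨hPm z, trivial⟩)
  have hgi : ∀ u a b, IntervalIntegrable (g u) volume a b := fun u a b =>
    (hgc u).intervalIntegrable a b
  have hg0 : ∀ u z, 0 ≤ g u z := fun u z => (hφbd _ (hPm z) _ (hQm _)).1
  have hgK : ∀ u z, g u z ≤ K := fun u z => (hφbd _ (hPm z) _ (hQm _)).2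
  have hI0 : ∀ u, ∀ θ ∈ Set.Icc θL θH, 0 ≤ ∫ z in θL..θ, g u z := fun u θ hz =>
    intervalIntegral.integral_nonneg hz.1 (fun z _ => hg0 u z)
  have hIK : ∀ u, ∀ θ ∈ Set.Icc θL θH, ∫ z in θL..θ, g u z ≤ K * (θH - θL) := by
    intro u θ hz
    have h1 : ∫ z in θL..θ, g u z ≤ ∫ z in θL..θ, K :=
      intervalIntegral.integral_mono_on hz.1 (hgi u _ _) (by simp) (fun z _ => hgK u z)
    rw [intervalIntegral.integral_const, smul_eq_mul] at h1
    nlinarith [hz.2]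
  have hgl : ∀ u v z, |g u z - g v z| ≤ M * dist u v := by
    intro u v z
    refine (hφlip _ (hPm z) _ (hQm _) _ (hQm _)).trans ?_
    refine mul_le_mul_of_nonneg_left ((hQl _ _).trans ?_) hM.le
    exact ContinuousMap.dist_apply_le_dist (f := u) (g := v) _
  have hIl : ∀ u v, ∀ θ ∈ Set.Icc θL θH,
      |(∫ z in θL..θ, g u z) - ∫ z in θL..θ, g v z| ≤ M * dist u v * (θH - θL) := by
    intro u v θ hz
    rw [← intervalIntegral.integral_sub (hgi u _ _) (hgi v _ _)]
    have := intervalIntegral.norm_integral_le_of_norm_le_const (a := θL) (b := θ)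
      (f := fun z => g u z - g v z) (C := M * dist u v) (fun z _ => hgl u v z)
    rw [Real.norm_eq_abs, abs_of_nonneg (sub_nonneg.2 hz.1)] at this
    refine this.trans (mul_le_mul_of_nonneg_left (by linarith [hz.2]) (by positivity))
  let F : X → ℝ → ℝ := fun u θ => (1 + ξ₀) * Real.exp (-(∫ z in θL..θ, g u z)) - 1
  have hFc : ∀ u, Continuous (F u) := by
    intro u
    have h1 : Continuous (fun θ => ∫ z in θL..θ, g u z) :=
      intervalIntegral.continuous_primitive (hgi u) θL
    exact ((Real.continuous_exp.comp h1.neg).const_mul _).sub continuous_const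
  let T : X → X := fun u => ⟨fun θ => F u θ, (hFc u).comp continuous_subtype_val⟩
  have hc0 : 0 ≤ (1 + ξ₀) * M * (θH - θL) := by
    have : 0 ≤ θH - θL := by linarith
    positivity
  have hT : ContractingWith ⟨(1 + ξ₀) * M * (θH - θL), hc0⟩ T := by
    refine ⟨by exact_mod_cast hcontr, LipschitzWith.of_dist_le_mul fun u v => ?_⟩
    have hd : 0 ≤ dist u v := dist_nonneg
    refine (ContinuousMap.dist_le (mul_nonneg hc0 hd)).2 fun θ => ?_
    have h1 := (exp_neg_sub_le_aux _ _ (hI0 u θ θ.2) (hI0 v θ θ.2)).trans (hIl u v θ θ.2)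
    have h2 : T u θ - T v θ = (1 + ξ₀) * (Real.exp (-(∫ z in θL..θ, g u z)) -
        Real.exp (-(∫ z in θL..θ, g v z))) := by
      change F u θ - F v θ = _
      simp only [F]; ring
    rw [Real.dist_eq, h2, abs_mul, abs_of_pos (by linarith : 0 < 1 + ξ₀)]
    have h3 := mul_le_mul_of_nonneg_left h1 (by linarith : 0 ≤ 1 + ξ₀)
    change _ ≤ (1 + ξ₀) * M * (θH - θL) * dist u v
    linarith
  have hFm : ∀ u, ∀ θ ∈ Set.Icc θL θH, F u θ ∈ Set.Icc 0 ξ₀ := by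
    intro u θ hz
    have h1 : Real.exp (-(K * (θH - θL))) ≤ Real.exp (-(∫ z in θL..θ, g u z)) :=
      Real.exp_le_exp.2 (by linarith [hIK u θ hz])
    have h2 : Real.exp (-(∫ z in θL..θ, g u z)) ≤ 1 :=
      Real.exp_le_one_iff.2 (by linarith [hI0 u θ hz])
    simp only [F]
    constructor <;> nlinarith
  have hint : ∀ (u : X) (η : ℝ → ℝ), (∀ θ (hz : θ ∈ Set.Icc θL θH), u ⟨θ, hz⟩ = η θ) →
      (∀ θ ∈ Set.Icc θL θH, 0 ≤ η θ ∧ η θ ≤ ξ₀) → ∀ θ ∈ Set.Icc θL θH,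
      ∫ z in θL..θ, g u z = ∫ z in θL..θ, φ z (η z) := by
    intro u η hu hb θ hz
    refine intervalIntegral.integral_congr fun z hz' => ?_
    rw [Set.uIcc_of_le hz.1] at hz'
    have hm : z ∈ Set.Icc θL θH := ⟨hz'.1, hz'.2.trans hz.2⟩
    simp only [g]
    rw [hPe z hm, Set.projIcc_of_mem hle hm, hu z hm, hQe _ (hb z hm)]
  have : Nonempty X := ⟨0⟩
  let w : X := ContractingWith.fixedPoint T hT
  have hw : T w = w := hT.fixedPoint_isFixedPt
  have hwF : ∀ θ (hz : θ ∈ Set.Icc θL θH), w ⟨θ, hz⟩ = F w θ := fun θ hz =>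
    (congrArg (fun u : X => u ⟨θ, hz⟩) hw).symm
  refine ⟨F w, ⟨(hFc w).continuousOn, by simp [F], hFm w, fun θ hz => ?_⟩, ?_⟩
  · rw [← hint w (F w) hwF (hFm w) θ hz]
  · rintro η ⟨hηc, -, hηb, hηe⟩ θ hz
    let u : X := ⟨fun θ => η θ, hηc.domRestrict⟩
    have hu : T u = u := by
      ext t
      change F u t = η t
      rw [hηe t t.2, ← hint u η (fun _ _ => rfl) hηb t t.2]
    have huw : u = w := hT.fixedPoint_unique hu
    rw [← hwF θ hz, ← huw]
    rfl
end

section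
/- Let θ_L < θ_H be real numbers. Let F : [0, ∞) × [θ_L, θ_H] → ℝ be such that for each θ, y ↦ F(y; θ) is a continuous nondecreasing function with 0 ≤ F(y; θ) ≤ 1 and ∫_0^∞ (1 − F(y; θ)) dy < ∞; assume that for each y the map θ ↦ F(y; θ) is continuously differentiable with ∂_θF(y; θ) < 0 for all y > 0, that there is an integrable function g on [0, ∞) with |∂_θF(y; θ)| ≤ g(y) for all θ, and that ∂_θF is jointly continuous. Let γ : [θ_L, θ_H] → (0, ∞) be continuously differentiable with γ'(θ) ≥ 0, and let ξ : [θ_L, θ_H] → [0, ∞) be continuously differentiable with ξ'(θ) < 0 for all θ. Define Ψ(θ, x) := ∫_{x/γ(θ)}^∞ (1 − F(y; θ)) dy and Ψ_θ(θ, x) := −∫_{x/γ(θ)}^∞ ∂_θF(y; θ) dy, and assume the truth-telling ODE ξ'(θ)·Ψ(θ, ξ(θ)) + (1 + ξ(θ))·Ψ_θ(θ, ξ(θ)) = 0 holds for all θ, and that 1 − F(ξ(θ)/γ(θ); θ) > 0 for all θ. Then the premium map p(θ) := (1 + ξ(θ))·Ψ(θ, ξ(θ)) is strictly increasing on [θ_L,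 θ_H]. -/
open MeasureTheory

/-- Proposition 4.8(3): under risk-type uncertainty, with claim-size
CDFs F(·; θ) satisfying ∂_θF < 0 with dominated, jointly continuous θ-derivative,
a nondecreasing continuously differentiable risk-aversion γ(θ) > 0, and a strictly
decreasing continuously differentiable loading schedule ξ(θ) ≥ 0 satisfying the
truth-telling ODE ξ'(θ)·Ψ(θ, ξ(θ)) + (1 + ξ(θ))·Ψ_θ(θ, ξ(θ)) = 0 with
1 − F(ξ(θ)/γ(θ); θ) > 0, the premium p(θ) = (1 + ξ(θ))·Ψ(θ, ξ(θ)) is strictly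
increasing on [θ_L, θ_H]. Here F y θ denotes F(y; θ) and Fθ y θ denotes ∂_θF(y; θ). -/
theorem premium_strictly_increasing
    (θL θH : ℝ) (hθ : θL < θH)
    (F : ℝ → ℝ → ℝ)
    (hFcont : ∀ θ ∈ Set.Icc θL θH, ContinuousOn (fun y => F y θ) (Set.Ici 0))
    (hFmono : ∀ θ ∈ Set.Icc θL θH, MonotoneOn (fun y => F y θ) (Set.Ici 0))
    (hFrange : ∀ θ ∈ Set.Icc θL θH, ∀ y : ℝ, 0 ≤ y → F y θ ∈ Set.Icc (0 : ℝ) 1)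
    (hFint : ∀ θ ∈ Set.Icc θL θH,
      IntegrableOn (fun y => 1 - F y θ) (Set.Ioi 0))
    (Fθ : ℝ → ℝ → ℝ)
    (hFθderiv : ∀ y : ℝ, 0 ≤ y → ∀ θ ∈ Set.Icc θL θH,
      HasDerivAt (fun t => F y t) (Fθ y θ) θ)
    (hFθneg : ∀ y : ℝ, 0 < y → ∀ θ ∈ Set.Icc θL θH, Fθ y θ < 0)
    (g : ℝ → ℝ)
    (hg_int : IntegrableOn g (Set.Ioi 0))
    (hg_dom : ∀ y : ℝ, 0 ≤ y → ∀ θ ∈ Set.Icc θL θH, |Fθ y θ| ≤ g y)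
    (hFθjc : ContinuousOn (fun p : ℝ × ℝ => Fθ p.1 p.2)
      (Set.Ici 0 ×ˢ Set.Icc θL θH))
    (γ γ' : ℝ → ℝ)
    (hγpos : ∀ θ ∈ Set.Icc θL θH, 0 < γ θ)
    (hγderiv : ∀ θ ∈ Set.Icc θL θH, HasDerivAt γ (γ' θ) θ)
    (hγ'cont : ContinuousOn γ' (Set.Icc θL θH))
    (hγ'nonneg : ∀ θ ∈ Set.Icc θL θH, 0 ≤ γ' θ)
    (ξ ξ' : ℝ → ℝ)
    (hξnonneg : ∀ θ ∈ Set.Icc θL θH, 0 ≤ ξ θ)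
    (hξderiv : ∀ θ ∈ Set.Icc θL θH, HasDerivAt ξ (ξ' θ) θ)
    (hξ'cont : ContinuousOn ξ' (Set.Icc θL θH))
    (hξ'neg : ∀ θ ∈ Set.Icc θL θH, ξ' θ < 0)
    (Ψ Ψθ : ℝ → ℝ → ℝ)
    (hΨ : ∀ θ x : ℝ, Ψ θ x = ∫ y in Set.Ioi (x / γ θ), (1 - F y θ))
    (hΨθ : ∀ θ x : ℝ, Ψθ θ x = -∫ y in Set.Ioi (x / γ θ), Fθ y θ)
    (hODE : ∀ θ ∈ Set.Icc θL θH,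
      ξ' θ * Ψ θ (ξ θ) + (1 + ξ θ) * Ψθ θ (ξ θ) = 0)
    (hsurv : ∀ θ ∈ Set.Icc θL θH, 0 < 1 - F (ξ θ / γ θ) θ) :
    StrictMonoOn (fun θ => (1 + ξ θ) * Ψ θ (ξ θ)) (Set.Icc θL θH) := by
  have hIF : ∀ θ ∈ Set.Icc θL θH, ∀ a, 0 ≤ a →
      IntegrableOn (fun y => 1 - F y θ) (Set.Ioi a) := fun θ h a ha =>
    (hFint θ h).mono_set (Set.Ioi_subset_Ioi ha)
  have hIg : ∀ a, 0 ≤ a → IntegrableOn g (Set.Ioi a) := fun a ha =>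
    hg_int.mono_set (Set.Ioi_subset_Ioi ha)
  have hLipC : ∀ y : ℝ, 0 ≤ y → ∀ C : ℝ, (∀ θ ∈ Set.Icc θL θH, |Fθ y θ| ≤ C) →
      ∀ s ∈ Set.Icc θL θH, ∀ t ∈ Set.Icc θL θH, |F y t - F y s| ≤ C * |t - s| := by
    intro y hy C hC s hs t ht
    have := Convex.norm_image_sub_le_of_norm_hasDerivWithin_le (f := fun t => F y t)
      (f' := fun t => Fθ y t) (C := C) (s := Set.Icc θL θH)
      (fun x hx => (hFθderiv y hy x hx).hasDerivWithinAt) (fun x hx => hC x hx)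
      (convex_Icc _ _) hs ht
    simpa [Real.norm_eq_abs] using this
  have hd0 : ∀ θ ∈ Set.Icc θL θH, 0 ≤ ξ θ / γ θ := fun θ h =>
    div_nonneg (hξnonneg θ h) (hγpos θ h).le
  have hdder : ∀ θ ∈ Set.Icc θL θH,
      HasDerivAt (fun t => ξ t / γ t) ((ξ' θ * γ θ - ξ θ * γ' θ) / γ θ ^ 2) θ := fun θ h =>
    (hξderiv θ h).div (hγderiv θ h) (hγpos θ h).ne'
  have hII : ∀ θ ∈ Set.Icc θL θH, ∀ a, 0 ≤ a → ∀ b, 0 ≤ b →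
      IntervalIntegrable (fun y => 1 - F y θ) volume a b := by
    intro θ h a ha b hb
    apply ContinuousOn.intervalIntegrable
    apply (continuousOn_const.sub (hFcont θ h)).mono
    intro y hy
    exact le_trans (le_min ha hb) hy.1
  have hdec : ∀ θ ∈ Set.Icc θL θH, ∀ b, 0 ≤ b →
      Ψ θ (ξ θ) = (∫ y in Set.Ioi b, (1 - F y θ)) + ∫ y in (ξ θ / γ θ)..b, (1 - F y θ) := by
    intro θ h b hb
    rw [hΨ, ← intervalIntegral.integral_interval_add_Ioi (hIF θ h _ (hd0 θ h)) (hIF θ h b hb)]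
    ring
  -- continuity
  have hcont : ContinuousOn (fun θ => Ψ θ (ξ θ)) (Set.Icc θL θH) := by
    intro θ0 h0
    set b := ξ θ0 / γ θ0 with hb
    have hb0 : 0 ≤ b := hd0 θ0 h0
    have hbound : ∀ θ ∈ Set.Icc θL θH, |Ψ θ (ξ θ) - Ψ θ0 (ξ θ0)| ≤
        (∫ y in Set.Ioi b, g y) * |θ - θ0| + |b - ξ θ / γ θ| := by
      intro θ h
      rw [hdec θ h b hb0, hΨ θ0, ← hb]
      have e : (∫ y in Set.Ioi b, (1 - F y θ)) + (∫ y in (ξ θ / γ θ)..b, (1 - F y θ))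
          - (∫ y in Set.Ioi b, (1 - F y θ0)) =
          (∫ y in Set.Ioi b, ((1 - F y θ) - (1 - F y θ0))) +
            ∫ y in (ξ θ / γ θ)..b, (1 - F y θ) := by
        rw [integral_sub (hIF θ h b hb0) (hIF θ0 h0 b hb0)]; ring
      rw [e]
      refine (abs_add_le _ _).trans (add_le_add ?_ ?_)
      · rw [← integral_mul_const]
        rw [← Real.norm_eq_abs (∫ y in Set.Ioi b, ((1 - F y θ) - (1 - F y θ0)))]
        refine norm_integral_le_of_norm_le ((hIg b hb0).mul_const _) ?_
        filter_upwards [ae_restrict_mem measurableSet_Ioi] with y hy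
        have hy0 : 0 ≤ y := hb0.trans (le_of_lt hy)
        have := hLipC y hy0 (g y) (fun t ht => hg_dom y hy0 t ht) θ0 h0 θ h
        rw [Real.norm_eq_abs, show (1 - F y θ) - (1 - F y θ0) = -(F y θ - F y θ0) by ring, abs_neg]
        exact this
      · have := intervalIntegral.norm_integral_le_of_norm_le_const
          (f := fun y => 1 - F y θ) (a := ξ θ / γ θ) (b := b) (C := 1) (by
            intro y hy
            have hy0 : 0 ≤ y := (le_min (hd0 θ h) hb0).trans hy.1.le
            have := hFrange θ h y hy0
            rw [Real.norm_eq_abs, abs_le]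
            constructor <;> linarith [this.1, this.2])
        simpa [Real.norm_eq_abs] using this
    have hlim : Filter.Tendsto (fun θ => (∫ y in Set.Ioi b, g y) * |θ - θ0| + |b - ξ θ / γ θ|)
        (nhdsWithin θ0 (Set.Icc θL θH)) (nhds 0) := by
      have hc : ContinuousAt
          (fun θ => (∫ y in Set.Ioi b, g y) * |θ - θ0| + |b - ξ θ / γ θ|) θ0 := by
        have := (hdder θ0 h0).continuousAt
        exact (continuousAt_const.mul (continuousAt_id.sub continuousAt_const).abs).add
          (continuousAt_const.sub this).abs
      have := hc.tendsto.mono_left (nhdsWithin_le_nhds (s := Set.Icc θL θH))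
      simpa [← hb] using this
    unfold ContinuousWithinAt
    rw [tendsto_iff_norm_sub_tendsto_zero]
    refine squeeze_zero' (Filter.Eventually.of_forall fun _ => norm_nonneg _) ?_ hlim
    filter_upwards [self_mem_nhdsWithin] with θ h
    exact hbound θ h
  -- derivative
  have hder : ∀ θ0 ∈ Set.Ioo θL θH, HasDerivAt (fun θ => Ψ θ (ξ θ))
      (Ψθ θ0 (ξ θ0) + -(1 - F (ξ θ0 / γ θ0) θ0) *
        ((ξ' θ0 * γ θ0 - ξ θ0 * γ' θ0) / γ θ0 ^ 2) + 0) θ0 := by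
    intro θ0 hoo
    have h0 : θ0 ∈ Set.Icc θL θH := Set.Ioo_subset_Icc_self hoo
    have hN : Set.Icc θL θH ∈ nhds θ0 := Icc_mem_nhds hoo.1 hoo.2
    have hξpos : 0 < ξ θ0 := by
      rcases (hξnonneg θ0 h0).lt_or_eq with h | h
      · exact h
      · exfalso
        have hm : IsLocalMin ξ θ0 := by
          filter_upwards [hN] with t ht
          rw [← h]; exact hξnonneg t ht
        exact (hξ'neg θ0 h0).ne (hm.hasDerivAt_eq_zero (hξderiv θ0 h0))
    have hbpos : 0 < ξ θ0 / γ θ0 := div_pos hξpos (hγpos θ0 h0)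
    have hdd := hdder θ0 h0
    have hA : HasDerivAt (fun θ => ∫ y in Set.Ioi (ξ θ0 / γ θ0), (1 - F y θ)) (Ψθ θ0 (ξ θ0)) θ0 := by
      have hsub : Set.Ioi (ξ θ0 / γ θ0) ⊆ Set.Ici (0:ℝ) := fun y hy => hbpos.le.trans (le_of_lt hy)
      have := (hasDerivAt_integral_of_dominated_loc_of_deriv_le
        (μ := volume.restrict (Set.Ioi (ξ θ0 / γ θ0))) (F := fun θ y => 1 - F y θ)
        (F' := fun θ y => - Fθ y θ) (bound := g) (x₀ := θ0) hN
        (by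
          filter_upwards [hN] with t ht
          exact (hIF t ht _ hbpos.le).aestronglyMeasurable)
        (hIF θ0 h0 _ hbpos.le)
        (by
          apply ContinuousOn.aestronglyMeasurable _ measurableSet_Ioi
          apply ContinuousOn.neg
          exact hFθjc.comp (f := fun y : ℝ => (y, θ0)) (by fun_prop) (fun y hy => ⟨hsub hy, h0⟩))
        (by
          filter_upwards [ae_restrict_mem measurableSet_Ioi] with y hy t ht
          rw [norm_neg]
          exact hg_dom y (hsub hy) t ht)
        (hIg _ hbpos.le)
        (by
          filter_upwards [ae_restrict_mem measurableSet_Ioi] with y hy t ht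
          exact (hFθderiv y (hsub hy) t ht).const_sub 1)).2
      rw [hΨθ, ← integral_neg]
      exact this
    have hB : HasDerivAt (fun θ => ∫ y in (ξ θ / γ θ)..(ξ θ0 / γ θ0), (1 - F y θ0))
        (-(1 - F (ξ θ0 / γ θ0) θ0) * ((ξ' θ0 * γ θ0 - ξ θ0 * γ' θ0) / γ θ0 ^ 2)) θ0 := by
      have hc : ContinuousOn (fun y => 1 - F y θ0) (Set.Ioi 0) :=
        (continuousOn_const.sub (hFcont θ0 h0)).mono Set.Ioi_subset_Ici_self
      have h1 : HasDerivAt (fun u => ∫ y in u..(ξ θ0 / γ θ0), (1 - F y θ0))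
          (-(1 - F (ξ θ0 / γ θ0) θ0)) (ξ θ0 / γ θ0) :=
        intervalIntegral.integral_hasDerivAt_left (hII θ0 h0 _ hbpos.le _ hbpos.le)
          (hc.stronglyMeasurableAtFilter isOpen_Ioi _ hbpos)
          (hc.continuousAt (Ioi_mem_nhds hbpos))
      exact HasDerivAt.comp (h₂ := fun u => ∫ y in u..(ξ θ0 / γ θ0), (1 - F y θ0))
        (h := fun t => ξ t / γ t) θ0 h1 hdd
    have hR : HasDerivAt (fun θ => ∫ y in (ξ θ / γ θ)..(ξ θ0 / γ θ0), ((1 - F y θ) - (1 - F y θ0)))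
        0 θ0 := by
      obtain ⟨M, hM⟩ := ((isCompact_Icc (a := (0:ℝ)) (b := ξ θ0 / γ θ0 + 1)).prod
        (isCompact_Icc (a := θL) (b := θH))).exists_bound_of_continuousOn
          (hFθjc.mono (Set.prod_mono Set.Icc_subset_Ici_self subset_rfl))
      rw [hasDerivAt_iff_isLittleO]
      have hsm : (fun θ => (θ - θ0) * (ξ θ0 / γ θ0 - ξ θ / γ θ)) =o[nhds θ0] fun θ => θ - θ0 := by
        have h2 : (fun θ => ξ θ0 / γ θ0 - ξ θ / γ θ) =o[nhds θ0] fun _ => (1:ℝ) := by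
          rw [Asymptotics.isLittleO_one_iff]
          have : ContinuousAt (fun θ => ξ θ0 / γ θ0 - ξ θ / γ θ) θ0 :=
            continuousAt_const.sub hdd.continuousAt
          have h3 := this.tendsto
          rwa [sub_self] at h3
        simpa using (Asymptotics.isBigO_refl (fun θ => θ - θ0) (nhds θ0)).mul_isLittleO h2
      refine Asymptotics.IsBigO.trans_isLittleO ?_ hsm
      refine Asymptotics.IsBigO.of_bound M ?_
      have hev : ∀ᶠ θ in nhds θ0, ξ θ / γ θ < ξ θ0 / γ θ0 + 1 :=
        hdd.continuousAt.eventually_lt continuousAt_const (by simp)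
      filter_upwards [hN, hev] with θ h hlt
      have := intervalIntegral.norm_integral_le_of_norm_le_const
          (f := fun y => (1 - F y θ) - (1 - F y θ0)) (a := ξ θ / γ θ) (b := ξ θ0 / γ θ0)
          (C := M * |θ - θ0|) (by
            intro y hy
            have hy0 : 0 ≤ y := (le_min (hd0 θ h) hbpos.le).trans hy.1.le
            have hy1 : y ≤ ξ θ0 / γ θ0 + 1 := hy.2.trans (max_le hlt.le (by linarith))
            have := hLipC y hy0 M (fun t ht => hM (y, t) ⟨⟨hy0, hy1⟩, ht⟩) θ0 h0 θ h
            rw [Real.norm_eq_abs, show (1 - F y θ) - (1 - F y θ0) = -(F y θ - F y θ0) by ring,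
              abs_neg]
            exact this)
      simp only [intervalIntegral.integral_same, sub_zero, smul_zero, norm_mul]
      rw [← mul_assoc]
      exact this
    refine ((hA.add hB).add hR).congr_of_eventuallyEq ?_
    filter_upwards [hN] with θ h
    have e := hdec θ h _ hbpos.le
    simp only [Pi.add_apply]
    rw [e, intervalIntegral.integral_sub (hII θ h _ (hd0 θ h) _ hbpos.le)
      (hII θ0 h0 _ (hd0 θ h) _ hbpos.le)]
    ring
  refine strictMonoOn_of_deriv_pos (convex_Icc _ _) ?_ ?_
  · refine ContinuousOn.mul (continuousOn_const.add ?_) hcont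
    exact fun θ h => (hξderiv θ h).continuousAt.continuousWithinAt
  · intro θ h
    rw [interior_Icc] at h
    have h0 : θ ∈ Set.Icc θL θH := Set.Ioo_subset_Icc_self h
    have hp := ((hξderiv θ h0).const_add 1).mul (hder θ h)
    have hp' : deriv (fun θ => (1 + ξ θ) * Ψ θ (ξ θ)) θ = _ := hp.deriv
    rw [hp']
    have hneg : (ξ' θ * γ θ - ξ θ * γ' θ) / γ θ ^ 2 < 0 := by
      apply div_neg_of_neg_of_pos
      · have := mul_neg_of_neg_of_pos (hξ'neg θ h0) (hγpos θ h0)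
        have := mul_nonneg (hξnonneg θ h0) (hγ'nonneg θ h0)
        linarith
      · exact pow_pos (hγpos θ h0) 2
    have h1 : 0 < 1 + ξ θ := by linarith [hξnonneg θ h0]
    have h2 := mul_pos h1 (mul_pos (hsurv θ h0) (neg_pos.2 hneg))
    have h3 := hODE θ h0
    linarith
end

section
/- Let θ_L < θ_H be real numbers and γ > 0. Let F : [0, ∞) × [θ_L, θ_H] → ℝ be such that for each θ, y ↦ F(y; θ) is continuously differentiable with density f(y; θ) := ∂_yF(y; θ) ≥ 0, F(0; θ) = 0, 0 ≤ F(y; θ) ≤ 1, ∫_0^∞ (1 − F(y; θ)) dy < ∞, and y·(1 − F(y; θ)) → 0 as y → ∞; assume θ ↦ F(y; θ) is continuously differentiable with ∂_θF(y; θ) < 0 for all y > 0, that ∂_θF is jointly continuous, that there is a function g on [0, ∞) with |∂_θF(y; θ)| ≤ g(y) for all θ and ∫_0^∞ (1 + y)·g(y) dy < ∞, and that y·|∂_θF(y; θ)| → 0 as y → ∞ for each θ. Let ξ : [θ_L, θ_H] → (0, ∞) be continuously differentiable with ξ'(θ) < 0 for all θ, satisfying ξ'(θ)·Ψ(θ,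 ξ(θ)) + (1 + ξ(θ))·Ψ_θ(θ, ξ(θ)) = 0 for all θ, where Ψ(θ, x) := ∫_{x/γ}^∞ (1 − F(y; θ)) dy and Ψ_θ(θ, x) := −∫_{x/γ}^∞ ∂_θF(y; θ) dy. For θ, θ̃ ∈ [θ_L, θ_H] define J^θ(θ̃) := −(1 + ξ(θ̃))·∫_{ξ(θ̃)/γ}^∞ (1 − F(y; θ̃)) dy − ∫_0^{ξ(θ̃)/γ} (y + (γ/2)·y²)·f(y; θ) dy − (ξ(θ̃)/γ)·(1 + ξ(θ̃)/2)·(1 − F(ξ(θ̃)/γ; θ)). Then for every θ ∈ [θ_L, θ_H], J^θ(θ̃) ≤ J^θ(θ) for all θ̃ ∈ [θ_L, θ_H], with strict inequality whenever θ̃ ≠ θ and F(ξ(θ̃)/γ; θ) ≠ F(ξ(θ̃)/γ; θ̃) on the path; in particular θ̃ = θ maximizes J^θ over [θ_L, θ_H]. -/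
open MeasureTheory


lemma aux_g_int (g : ℝ → ℝ) (hg_int : IntegrableOn (fun y => (1 + y) * g y) (Set.Ioi 0)) :
    IntegrableOn g (Set.Ioi 0) := by
  have hm : AEStronglyMeasurable g (volume.restrict (Set.Ioi (0:ℝ))) := by
    have h1 : AEStronglyMeasurable (fun y : ℝ => (1 + y)⁻¹ * ((1 + y) * g y))
        (volume.restrict (Set.Ioi (0:ℝ))) := by
      refine AEStronglyMeasurable.mul ?_ hg_int.aestronglyMeasurable
      have : Measurable (fun y : ℝ => (1 + y)⁻¹) := by fun_prop
      exact this.aestronglyMeasurable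
    refine h1.congr ?_
    filter_upwards [ae_restrict_mem measurableSet_Ioi] with y hy
    have : (0:ℝ) < y := hy
    field_simp
  refine Integrable.mono hg_int hm ?_
  filter_upwards [ae_restrict_mem measurableSet_Ioi] with y hy
  have : (0:ℝ) < y := hy
  rw [norm_mul]
  have h2 : (1:ℝ) ≤ ‖1 + y‖ := by
    rw [Real.norm_of_nonneg (by linarith)]; linarith
  nlinarith [norm_nonneg (g y)]

lemma aux_lip {θL θH : ℝ} {F Fθ : ℝ → ℝ → ℝ}
    (hFθderiv : ∀ y : ℝ, 0 ≤ y → ∀ θ ∈ Set.Icc θL θH,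
      HasDerivAt (fun t => F y t) (Fθ y θ) θ)
    {y C : ℝ} (hy : 0 ≤ y) (hC : ∀ θ ∈ Set.Icc θL θH, |Fθ y θ| ≤ C)
    {s t : ℝ} (hs : s ∈ Set.Icc θL θH) (ht : t ∈ Set.Icc θL θH) :
    |F y t - F y s| ≤ C * |t - s| :=
  Convex.norm_image_sub_le_of_norm_hasDerivWithin_le (f := fun t => F y t) (f' := fun t => Fθ y t)
    (fun x hx => (hFθderiv y hy x hx).hasDerivWithinAt) hC (convex_Icc _ _) hs ht

lemma aux_L1 {θL θH : ℝ} {F Fθ : ℝ → ℝ → ℝ} {g : ℝ → ℝ}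
    (hFint : ∀ θ ∈ Set.Icc θL θH, IntegrableOn (fun y => 1 - F y θ) (Set.Ioi 0))
    (hFθderiv : ∀ y : ℝ, 0 ≤ y → ∀ θ ∈ Set.Icc θL θH,
      HasDerivAt (fun t => F y t) (Fθ y θ) θ)
    (hg_dom : ∀ y : ℝ, 0 ≤ y → ∀ θ ∈ Set.Icc θL θH, |Fθ y θ| ≤ g y)
    (hg : IntegrableOn g (Set.Ioi 0))
    {a : ℝ} (ha : 0 ≤ a) {t0 : ℝ} (ht0 : t0 ∈ Set.Icc θL θH) :
    HasDerivWithinAt (fun t => ∫ y in Set.Ioi a, (1 - F y t)) (-∫ y in Set.Ioi a, Fθ y t0)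
      (Set.Icc θL θH) t0 := by
  have hsub : Set.Ioi a ⊆ Set.Ioi (0:ℝ) := Set.Ioi_subset_Ioi ha
  have hI : ∀ θ ∈ Set.Icc θL θH, IntegrableOn (fun y => 1 - F y θ) (Set.Ioi a) :=
    fun θ h => (hFint θ h).mono_set hsub
  rw [hasDerivWithinAt_iff_tendsto_slope, ← integral_neg]
  have hmem : ∀ᶠ t in nhdsWithin t0 (Set.Icc θL θH \ {t0}), t ∈ Set.Icc θL θH \ {t0} :=
    self_mem_nhdsWithin
  have key : Filter.Tendsto (fun t => ∫ y in Set.Ioi a, slope (fun t => 1 - F y t) t0 t)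
      (nhdsWithin t0 (Set.Icc θL θH \ {t0})) (nhds (∫ y in Set.Ioi a, -Fθ y t0)) := by
    refine tendsto_integral_filter_of_dominated_convergence g ?_ ?_ (hg.mono_set hsub) ?_
    · filter_upwards [hmem] with t ht
      simp only [slope_def_field]
      exact (((hI t ht.1).sub (hI t0 ht0)).div_const (t - t0)).aestronglyMeasurable
    · filter_upwards [hmem] with t ht
      filter_upwards [ae_restrict_mem measurableSet_Ioi] with y hy
      have hy0 : 0 ≤ y := ha.trans (le_of_lt hy)
      have h := aux_lip hFθderiv hy0 (hg_dom y hy0) ht0 ht.1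
      have hne : t - t0 ≠ 0 := sub_ne_zero.mpr ht.2
      rw [slope_def_field, Real.norm_eq_abs, abs_div, div_le_iff₀ (abs_pos.mpr hne)]
      rw [show 1 - F y t - (1 - F y t0) = -(F y t - F y t0) by ring, abs_neg]
      exact h
    · filter_upwards [ae_restrict_mem measurableSet_Ioi] with y hy
      have hy0 : 0 ≤ y := ha.trans (le_of_lt hy)
      have := ((hFθderiv y hy0 t0 ht0).const_sub 1).hasDerivWithinAt (s := Set.Icc θL θH)
      exact hasDerivWithinAt_iff_tendsto_slope.mp this
  refine key.congr' ?_
  filter_upwards [hmem] with t ht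
  simp only [slope_def_field]
  rw [integral_div, integral_sub (hI t ht.1) (hI t0 ht0)]

lemma aux_E {θL θH : ℝ} {F Fθ : ℝ → ℝ → ℝ} {d : ℝ → ℝ}
    (hFθderiv : ∀ y : ℝ, 0 ≤ y → ∀ θ ∈ Set.Icc θL θH,
      HasDerivAt (fun t => F y t) (Fθ y θ) θ)
    (hFθjc : ContinuousOn (fun p : ℝ × ℝ => Fθ p.1 p.2)
      (Set.Ici 0 ×ˢ Set.Icc θL θH))
    (hdpos : ∀ t ∈ Set.Icc θL θH, 0 < d t)
    (hd : ContinuousOn d (Set.Icc θL θH))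
    {t0 : ℝ} (ht0 : t0 ∈ Set.Icc θL θH) :
    HasDerivWithinAt (fun t => ∫ y in d t..d t0, (F y t0 - F y t)) 0
      (Set.Icc θL θH) t0 := by
  obtain ⟨M, hM⟩ := isCompact_Icc.exists_bound_of_continuousOn hd
  obtain ⟨C, hC⟩ := ((isCompact_Icc (a := (0:ℝ)) (b := M)).prod
    (isCompact_Icc (a := θL) (b := θH))).exists_bound_of_continuousOn
    (hFθjc.mono (Set.prod_mono (fun x hx => hx.1) subset_rfl))
  rw [hasDerivWithinAt_iff_isLittleO]
  have hlo : (fun t => (d t0 - d t) * (t - t0)) =o[nhdsWithin t0 (Set.Icc θL θH)]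
      (fun t => (1:ℝ) * (t - t0)) := by
    refine Asymptotics.IsLittleO.mul_isBigO ?_ (Asymptotics.isBigO_refl _ _)
    rw [Asymptotics.isLittleO_one_iff]
    have := (hd t0 ht0).tendsto.const_sub (d t0)
    simpa using this
  simp only [one_mul] at hlo
  refine Asymptotics.IsBigO.trans_isLittleO ?_ hlo
  refine Asymptotics.IsBigO.of_bound C ?_
  filter_upwards [self_mem_nhdsWithin] with t ht
  simp only [intervalIntegral.integral_same, sub_zero, smul_zero]
  have hb : ∀ y ∈ Set.uIoc (d t) (d t0), ‖F y t0 - F y t‖ ≤ C * |t - t0| := by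
    intro y hy
    have h1 := hM t ht
    have h2 := hM t0 ht0
    rw [Real.norm_eq_abs] at h1 h2
    have hy0 : 0 ≤ y := by
      have := hy.1
      have h3 := lt_min (hdpos t ht) (hdpos t0 ht0)
      linarith
    have hyM : y ≤ M := hy.2.trans (max_le ((le_abs_self _).trans h1) ((le_abs_self _).trans h2))
    rw [Real.norm_eq_abs, abs_sub_comm]
    exact aux_lip hFθderiv hy0 (fun θ hθ => hC (y, θ) ⟨⟨hy0, hyM⟩, hθ⟩) ht0 ht
  have := intervalIntegral.norm_integral_le_of_norm_le_const hb
  refine this.trans (le_of_eq ?_)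
  rw [norm_mul, Real.norm_eq_abs, Real.norm_eq_abs]; ring

/-- fundamental theorem composed -/
lemma aux_ftc {h : ℝ → ℝ} (hc : ContinuousOn h (Set.Ici 0)) {x : ℝ} (hx : 0 < x)
    {b : ℝ} (hb : 0 ≤ b) :
    HasDerivAt (fun u => ∫ y in b..u, h y) (h x) x := by
  have hn : Set.Ici (0:ℝ) ∈ nhds x := Ici_mem_nhds hx
  refine intervalIntegral.integral_hasDerivAt_right ?_ ?_ (hc.continuousAt hn)
  · refine (hc.mono ?_).intervalIntegrable
    intro y hy
    exact (le_min hb hx.le).trans hy.1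
  · exact (hc.mono Set.Ioi_subset_Ici_self).stronglyMeasurableAtFilter isOpen_Ioi x hx

lemma aux_A {θL θH : ℝ} {F Fθ : ℝ → ℝ → ℝ} {g : ℝ → ℝ} {d d' : ℝ → ℝ}
    (hFc : ∀ θ ∈ Set.Icc θL θH, ContinuousOn (fun y => F y θ) (Set.Ici 0))
    (hFint : ∀ θ ∈ Set.Icc θL θH, IntegrableOn (fun y => 1 - F y θ) (Set.Ioi 0))
    (hFθderiv : ∀ y : ℝ, 0 ≤ y → ∀ θ ∈ Set.Icc θL θH,
      HasDerivAt (fun t => F y t) (Fθ y θ) θ)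
    (hFθjc : ContinuousOn (fun p : ℝ × ℝ => Fθ p.1 p.2)
      (Set.Ici 0 ×ˢ Set.Icc θL θH))
    (hg_dom : ∀ y : ℝ, 0 ≤ y → ∀ θ ∈ Set.Icc θL θH, |Fθ y θ| ≤ g y)
    (hg : IntegrableOn g (Set.Ioi 0))
    (hdpos : ∀ t ∈ Set.Icc θL θH, 0 < d t)
    (hd : ∀ t ∈ Set.Icc θL θH, HasDerivAt d (d' t) t)
    {t0 : ℝ} (ht0 : t0 ∈ Set.Icc θL θH) :
    HasDerivWithinAt (fun t => ∫ y in Set.Ioi (d t), (1 - F y t))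
      (-(∫ y in Set.Ioi (d t0), Fθ y t0) - (1 - F (d t0) t0) * d' t0)
      (Set.Icc θL θH) t0 := by
  have h1 := aux_L1 hFint hFθderiv hg_dom hg (hdpos t0 ht0).le ht0
  have h2 := aux_E hFθderiv hFθjc hdpos (fun t ht => (hd t ht).continuousAt.continuousWithinAt) ht0
  have hc : ∀ t ∈ Set.Icc θL θH, ContinuousOn (fun y => 1 - F y t) (Set.Ici 0) :=
    fun t ht => continuousOn_const.sub (hFc t ht)
  have h3 := ((aux_ftc (hc t0 ht0) (hdpos t0 ht0) (hdpos t0 ht0).le).comp t0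
    (hd t0 ht0)).hasDerivWithinAt (s := Set.Icc θL θH)
  have h4 := (h1.add h2).sub h3
  refine (h4.congr_deriv (by ring)).congr_of_mem ?_ ht0
  intro t ht
  have hii : ∀ s ∈ Set.Icc θL θH, IntervalIntegrable (fun y => 1 - F y s) volume (d t) (d t0) := by
    intro s hs
    refine ((hc s hs).mono ?_).intervalIntegrable
    intro y hy
    exact (le_min (hdpos t ht).le (hdpos t0 ht0).le).trans hy.1
  have e1 := intervalIntegral.integral_Ioi_sub_Ioi'
    ((hFint t ht).mono_set (Set.Ioi_subset_Ioi (hdpos t ht).le))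
    ((hFint t ht).mono_set (Set.Ioi_subset_Ioi (hdpos t0 ht0).le))
  have e2 : ∫ y in d t..d t0, (F y t0 - F y t) =
      (∫ y in d t..d t0, (1 - F y t)) - ∫ y in d t..d t0, (1 - F y t0) := by
    rw [← intervalIntegral.integral_sub (hii t ht) (hii t0 ht0)]
    congr 1; ext y; ring
  have e3 := intervalIntegral.integral_symm (μ := volume) (f := fun y => 1 - F y t0) (d t) (d t0)
  simp only [Pi.add_apply, Pi.sub_apply, Function.comp_apply]
  linarith

lemma aux_parts {γ : ℝ} {G k : ℝ → ℝ}
    (hG : ∀ y : ℝ, 0 ≤ y → HasDerivAt G (k y) y)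
    (hk : ∀ y : ℝ, 0 ≤ y → 0 ≤ k y) {x : ℝ} (hx : 0 ≤ x) :
    (∫ y in (0:ℝ)..x, (y + γ / 2 * y ^ 2) * k y) + (x + γ / 2 * x ^ 2) * (1 - G x)
      = ∫ y in (0:ℝ)..x, (1 + γ * y) * (1 - G y) := by
  have hGc : ContinuousOn G (Set.uIcc 0 x) := by
    intro y hy
    rw [Set.uIcc_of_le hx] at hy
    exact (hG y hy.1).continuousAt.continuousWithinAt
  have hki : IntervalIntegrable k volume 0 x := by
    refine intervalIntegral.intervalIntegrable_deriv_of_nonneg hGc ?_ ?_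
    · intro y hy
      rw [min_eq_left hx] at hy
      exact hG y hy.1.le
    · intro y hy
      rw [min_eq_left hx] at hy
      exact hk y hy.1.le
  have := intervalIntegral.integral_mul_deriv_eq_deriv_mul (a := 0) (b := x)
    (u := fun y => y + γ / 2 * y ^ 2) (u' := fun y => 1 + γ * y) (v := fun y => G y - 1) (v' := k)
    (fun y _ => by
      have := (hasDerivAt_id y).add (((hasDerivAt_id y).pow 2).const_mul (γ / 2))
      refine this.congr_deriv ?_
      simp; ring)
    (fun y hy => by
      rw [Set.uIcc_of_le hx] at hy
      exact (hG y hy.1).sub_const 1)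
    (by apply Continuous.intervalIntegrable; fun_prop) hki
  rw [this]
  have e : ∫ y in (0:ℝ)..x, (1 + γ * y) * (G y - 1) = - ∫ y in (0:ℝ)..x, (1 + γ * y) * (1 - G y) := by
    rw [← intervalIntegral.integral_neg]; congr 1; ext y; ring
  rw [e]; ring

/-- truth-telling verification of Theorem 4.6(4): under risk-type
uncertainty with constant risk aversion γ > 0, claim-size CDFs F(·; θ) with
density f(·; θ), ∂_θF < 0 with dominated, jointly continuous θ-derivative and the
stated tail conditions, and a positive strictly decreasing loading schedule ξ(θ)
solving the truth-telling ODE, the utility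
J^θ(θ̃) = −(1 + ξ(θ̃))·∫_{ξ(θ̃)/γ}^∞ (1 − F(y; θ̃)) dy
          − ∫_0^{ξ(θ̃)/γ} (y + (γ/2)y²) f(y; θ) dy
          − (ξ(θ̃)/γ)(1 + ξ(θ̃)/2)(1 − F(ξ(θ̃)/γ; θ))
is maximized over θ̃ ∈ [θ_L, θ_H] at θ̃ = θ, strictly whenever θ̃ ≠ θ and
F(ξ(s)/γ; θ) ≠ F(ξ(s)/γ; s) somewhere on the path between θ and θ̃.
Here F y θ denotes F(y; θ), f y θ its y-density, Fθ y θ its θ-derivative. -/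
theorem truth_telling_risk_type
    (θL θH γ : ℝ) (hθ : θL < θH) (hγ : 0 < γ)
    (F f : ℝ → ℝ → ℝ)
    (hFderiv_y : ∀ θ ∈ Set.Icc θL θH, ∀ y : ℝ, 0 ≤ y →
      HasDerivAt (fun s => F s θ) (f y θ) y)
    (hf_nonneg : ∀ θ ∈ Set.Icc θL θH, ∀ y : ℝ, 0 ≤ y → 0 ≤ f y θ)
    (hF0 : ∀ θ ∈ Set.Icc θL θH, F 0 θ = 0)
    (hFrange : ∀ θ ∈ Set.Icc θL θH, ∀ y : ℝ, 0 ≤ y → F y θ ∈ Set.Icc (0 : ℝ) 1)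
    (hFint : ∀ θ ∈ Set.Icc θL θH,
      IntegrableOn (fun y => 1 - F y θ) (Set.Ioi 0))
    (hFtail : ∀ θ ∈ Set.Icc θL θH,
      Filter.Tendsto (fun y => y * (1 - F y θ)) Filter.atTop (nhds 0))
    (Fθ : ℝ → ℝ → ℝ)
    (hFθderiv : ∀ y : ℝ, 0 ≤ y → ∀ θ ∈ Set.Icc θL θH,
      HasDerivAt (fun t => F y t) (Fθ y θ) θ)
    (hFθneg : ∀ y : ℝ, 0 < y → ∀ θ ∈ Set.Icc θL θH, Fθ y θ < 0)
    (hFθjc : ContinuousOn (fun p : ℝ × ℝ => Fθ p.1 p.2)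
      (Set.Ici 0 ×ˢ Set.Icc θL θH))
    (g : ℝ → ℝ)
    (hg_dom : ∀ y : ℝ, 0 ≤ y → ∀ θ ∈ Set.Icc θL θH, |Fθ y θ| ≤ g y)
    (hg_int : IntegrableOn (fun y => (1 + y) * g y) (Set.Ioi 0))
    (hFθtail : ∀ θ ∈ Set.Icc θL θH,
      Filter.Tendsto (fun y => y * |Fθ y θ|) Filter.atTop (nhds 0))
    (ξ ξ' : ℝ → ℝ)
    (hξpos : ∀ θ ∈ Set.Icc θL θH, 0 < ξ θ)
    (hξderiv : ∀ θ ∈ Set.Icc θL θH, HasDerivAt ξ (ξ' θ) θ)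
    (hξ'cont : ContinuousOn ξ' (Set.Icc θL θH))
    (hξ'neg : ∀ θ ∈ Set.Icc θL θH, ξ' θ < 0)
    (Ψ Ψθ : ℝ → ℝ → ℝ)
    (hΨ : ∀ θ x : ℝ, Ψ θ x = ∫ y in Set.Ioi (x / γ), (1 - F y θ))
    (hΨθ : ∀ θ x : ℝ, Ψθ θ x = -∫ y in Set.Ioi (x / γ), Fθ y θ)
    (hODE : ∀ θ ∈ Set.Icc θL θH,
      ξ' θ * Ψ θ (ξ θ) + (1 + ξ θ) * Ψθ θ (ξ θ) = 0)
    (J : ℝ → ℝ → ℝ)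
    (hJ : ∀ θ θt : ℝ, J θ θt =
      -((1 + ξ θt) * ∫ y in Set.Ioi (ξ θt / γ), (1 - F y θt)) -
        (∫ y in (0 : ℝ)..(ξ θt / γ), (y + γ / 2 * y ^ 2) * f y θ) -
        (ξ θt / γ) * (1 + ξ θt / 2) * (1 - F (ξ θt / γ) θ)) :
    ∀ θ ∈ Set.Icc θL θH,
      (∀ θt ∈ Set.Icc θL θH, J θ θt ≤ J θ θ) ∧
      (∀ θt ∈ Set.Icc θL θH, θt ≠ θ →
        (∃ s ∈ Set.uIcc θ θt, F (ξ s / γ) θ ≠ F (ξ s / γ) s) →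
        J θ θt < J θ θ) := by
  have hg := aux_g_int g hg_int
  have hFc : ∀ θ ∈ Set.Icc θL θH, ContinuousOn (fun y => F y θ) (Set.Ici 0) :=
    fun θ h y hy => (hFderiv_y θ h y hy).continuousAt.continuousWithinAt
  have hdpos : ∀ t ∈ Set.Icc θL θH, 0 < ξ t / γ := fun t ht => div_pos (hξpos t ht) hγ
  have hd : ∀ t ∈ Set.Icc θL θH, HasDerivAt (fun t => ξ t / γ) (ξ' t / γ) t :=
    fun t ht => (hξderiv t ht).div_const γ
  -- θ-monotonicity
  have hanti : ∀ y : ℝ, 0 < y → StrictAntiOn (fun t => F y t) (Set.Icc θL θH) := by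
    intro y hy
    refine strictAntiOn_of_hasDerivWithinAt_neg (f' := fun t => Fθ y t) (convex_Icc _ _)
      (fun t ht => (hFθderiv y hy.le t ht).continuousAt.continuousWithinAt)
      (fun t ht => (hFθderiv y hy.le t (interior_subset ht)).hasDerivWithinAt)
      (fun t ht => hFθneg y hy t (interior_subset ht))
  intro θ hθm
  have hJd : ∀ t ∈ Set.Icc θL θH, HasDerivWithinAt (J θ)
      (ξ' t / γ * (1 + ξ t) * (F (ξ t / γ) θ - F (ξ t / γ) t)) (Set.Icc θL θH) t := by
    intro t ht
    have hA := aux_A hFc hFint hFθderiv hFθjc hg_dom hg hdpos hd ht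
    have h1 := ((hξderiv t ht).hasDerivWithinAt (s := Set.Icc θL θH)).const_add 1
    have hc : ContinuousOn (fun y => (1 + γ * y) * (1 - F y θ)) (Set.Ici 0) :=
      ContinuousOn.mul (by fun_prop) (continuousOn_const.sub (hFc θ hθm))
    have h2 := ((aux_ftc hc (hdpos t ht) le_rfl).comp t
      (hd t ht)).hasDerivWithinAt (s := Set.Icc θL θH)
    have h3 := (h1.mul hA).neg.sub h2
    refine (h3.congr_deriv ?_).congr_of_mem ?_ ht
    · have ho := hODE t ht
      rw [hΨ, hΨθ] at ho
      have hm : γ * (ξ t / γ) = ξ t := by field_simp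
      simp only [hm]
      linear_combination -ho
    · intro s hs
      have hp := aux_parts (γ := γ) (G := fun y => F y θ) (k := fun y => f y θ)
        (hFderiv_y θ hθm) (hf_nonneg θ hθm) (hdpos s hs).le
      rw [hJ]
      simp only [Pi.sub_apply, Pi.neg_apply, Pi.mul_apply, Function.comp_apply]
      rw [← hp]
      field_simp
      ring
  have hcont : ContinuousOn (J θ) (Set.Icc θL θH) := fun t ht => (hJd t ht).continuousWithinAt
  have hsub1 : Set.Icc θL θ ⊆ Set.Icc θL θH := Set.Icc_subset_Icc_right hθm.2
  have hsub2 : Set.Icc θ θH ⊆ Set.Icc θL θH := Set.Icc_subset_Icc_left hθm.1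
  have hmono : StrictMonoOn (J θ) (Set.Icc θL θ) := by
    refine strictMonoOn_of_hasDerivWithinAt_pos (convex_Icc _ _) (hcont.mono hsub1)
      (fun t ht => (hJd t (hsub1 (interior_subset ht))).mono (interior_subset.trans hsub1)) ?_
    intro t ht
    have hm := hsub1 (interior_subset ht)
    rw [interior_Icc] at ht
    have h1 := hanti _ (hdpos t hm) hm hθm ht.2
    have h2 := hξpos t hm
    have h3 : ξ' t / γ < 0 := div_neg_of_neg_of_pos (hξ'neg t hm) hγ
    exact mul_pos_of_neg_of_neg (mul_neg_of_neg_of_pos h3 (by linarith)) (sub_neg.mpr h1)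
  have hant : StrictAntiOn (J θ) (Set.Icc θ θH) := by
    refine strictAntiOn_of_hasDerivWithinAt_neg (convex_Icc _ _) (hcont.mono hsub2)
      (fun t ht => (hJd t (hsub2 (interior_subset ht))).mono (interior_subset.trans hsub2)) ?_
    intro t ht
    have hm := hsub2 (interior_subset ht)
    rw [interior_Icc] at ht
    have h1 := hanti _ (hdpos t hm) hθm hm ht.1
    have h2 := hξpos t hm
    have h3 : ξ' t / γ < 0 := div_neg_of_neg_of_pos (hξ'neg t hm) hγ
    exact mul_neg_of_neg_of_pos (mul_neg_of_neg_of_pos h3 (by linarith)) (sub_pos.mpr h1)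
  have hlt : ∀ θt ∈ Set.Icc θL θH, θt ≠ θ → J θ θt < J θ θ := by
    intro t ht hne
    rcases lt_or_gt_of_ne hne with h | h
    · exact hmono ⟨ht.1, h.le⟩ ⟨hθm.1, le_rfl⟩ h
    · exact hant ⟨le_rfl, hθm.2⟩ ⟨h.le, ht.2⟩ h
  refine ⟨fun t ht => ?_, fun t ht hne _ => hlt t ht hne⟩
  rcases eq_or_ne t θ with h | h
  · rw [h]
  · exact (hlt t ht h).le
end

section
/- Let γ > 0 and C be real numbers, and let I ⊆ (0, ∞) be an open interval on which D(θ) := 1 + γ·θ − C·θ·e^{1/(γ·θ)} > 0. Then the function ξ(θ) := 1/D(θ) − 1 is differentiable on I and satisfies θ·ξ'(θ) = −(1 + ξ(θ))·(1 + ξ(θ)/(θ·γ)) for all θ ∈ I. -/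
/-- closed-form solution from Section 5.2. For γ > 0 and a constant C,
on any open interval I ⊆ (0, ∞) on which D(θ) = 1 + γθ − Cθ·e^{1/(γθ)} > 0, the
function ξ(θ) = 1/D(θ) − 1 is differentiable and satisfies
θ·ξ'(θ) = −(1 + ξ(θ))·(1 + ξ(θ)/(θγ)). -/
theorem exponential_closed_form_solves_ode
    (γ C : ℝ) (hγ : 0 < γ)
    (I : Set ℝ) (hI : ∃ a b : ℝ, I = Set.Ioo a b)
    (hIpos : I ⊆ Set.Ioi 0)
    (hD : ∀ θ ∈ I, 0 < 1 + γ * θ - C * θ * Real.exp (1 / (γ * θ))) :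
    ∀ θ ∈ I, ∃ d : ℝ,
      HasDerivAt (fun t : ℝ =>
        1 / (1 + γ * t - C * t * Real.exp (1 / (γ * t))) - 1) d θ ∧
      θ * d =
        -((1 + (1 / (1 + γ * θ - C * θ * Real.exp (1 / (γ * θ))) - 1)) *
          (1 + (1 / (1 + γ * θ - C * θ * Real.exp (1 / (γ * θ))) - 1) /
            (θ * γ))) := by
  intro θ hθ
  have hp : 0 < θ := hIpos hθ
  have hDθ := hD θ hθ
  have hg : γ * θ ≠ 0 := by positivity
  have h1 : HasDerivAt (fun t : ℝ => γ * t) γ θ := by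
    simpa using (hasDerivAt_id θ).const_mul γ
  have hC : HasDerivAt (fun t : ℝ => C * t) C θ := by
    simpa using (hasDerivAt_id θ).const_mul C
  have h2 : HasDerivAt (fun t : ℝ => 1 / (γ * t)) (-γ / (γ * θ) ^ 2) θ := by
    simpa only [one_div] using h1.fun_inv hg
  have h3 := (h1.const_add 1).fun_sub (hC.fun_mul h2.exp)
  have h4 : HasDerivAt (fun t : ℝ =>
      1 / (1 + γ * t - C * t * Real.exp (1 / (γ * t))) - 1)
      (-(γ - (C * Real.exp (1 / (γ * θ)) + C * θ * (Real.exp (1 / (γ * θ)) *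
        (-γ / (γ * θ) ^ 2)))) / (1 + γ * θ - C * θ * Real.exp (1 / (γ * θ))) ^ 2) θ := by
    simpa only [one_div] using (h3.fun_inv hDθ.ne').sub_const 1
  refine ⟨_, h4, ?_⟩
  clear h4 h3 h2
  generalize Real.exp (1 / (γ * θ)) = E at hDθ ⊢
  have hne := hDθ.ne'
  obtain ⟨D, hDe⟩ : ∃ D, D = 1 + γ * θ - C * θ * E := ⟨_, rfl⟩
  rw [← hDe] at hne ⊢
  field_simp
  rw [hDe]
  ring
end

section
/- Let γ > 0 and 0 < θ_L ≤ θ_H be real numbers. Then 0 < 1 − γ·θ_L·ln((1 + γ·θ_L)/(γ·θ_L)) < 1, and the inequality ((1 + γ·θ_L)/θ_L)·e^{−1/(γ·θ_L)} ≥ γ·e^{−1/(γ·θ_H)} holds if and only if θ_H ≤ θ_L/(1 − γ·θ_L·ln((1 + γ·θ_L)/(γ·θ_L))). -/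
/-- the existence condition from the remark in Section 5.2. For γ > 0
and 0 < θ_L ≤ θ_H: 0 < 1 − γθ_L·ln((1 + γθ_L)/(γθ_L)) < 1, and
((1 + γθ_L)/θ_L)·e^{−1/(γθ_L)} ≥ γ·e^{−1/(γθ_H)} if and only if
θ_H ≤ θ_L/(1 − γθ_L·ln((1 + γθ_L)/(γθ_L))). -/
theorem feasibility_condition_exponential
    (γ θL θH : ℝ) (hγ : 0 < γ) (hθL : 0 < θL) (hθ : θL ≤ θH) :
    (0 < 1 - γ * θL * Real.log ((1 + γ * θL) / (γ * θL)) ∧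
      1 - γ * θL * Real.log ((1 + γ * θL) / (γ * θL)) < 1) ∧
    (((1 + γ * θL) / θL) * Real.exp (-(1 / (γ * θL))) ≥
        γ * Real.exp (-(1 / (γ * θH))) ↔
      θH ≤ θL / (1 - γ * θL * Real.log ((1 + γ * θL) / (γ * θL)))) := by
  have hx : 0 < γ * θL := mul_pos hγ hθL
  have hH : 0 < θH := lt_of_lt_of_le hθL hθ
  have hr : 1 < (1 + γ * θL) / (γ * θL) := by
    rw [lt_div_iff₀ hx]; linarith
  have hr0 : 0 < (1 + γ * θL) / (γ * θL) := by linarith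
  have hlpos := Real.log_pos hr
  have hlt := Real.log_lt_sub_one_of_pos hr0 (ne_of_gt hr)
  have he := Real.exp_log hr0
  have hA : (1 + γ * θL) / θL = γ * ((1 + γ * θL) / (γ * θL)) := by field_simp
  rw [hA]
  have hs : (1 + γ * θL) / (γ * θL) - 1 = 1 / (γ * θL) := by field_simp; ring
  rw [hs, lt_div_iff₀ hx] at hlt
  generalize Real.log ((1 + γ * θL) / (γ * θL)) = l at *
  have hD : 0 < 1 - γ * θL * l := by linarith
  refine ⟨⟨hD, by linarith [mul_pos hx hlpos]⟩, ?_⟩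
  rw [← he, ge_iff_le, mul_assoc, ← Real.exp_add, mul_le_mul_iff_right₀ hγ, Real.exp_le_exp,
    le_div_iff₀ hD]
  have key : l + -(1 / (γ * θL)) - -(1 / (γ * θH))
      = (θL - θH * (1 - γ * θL * l)) / (γ * θL * θH) := by
    field_simp; ring
  rw [← sub_nonneg, key, ← sub_nonneg (b := θH * (1 - γ * θL * l))]
  rw [le_div_iff₀ (mul_pos hx hH), zero_mul]
end
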